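/- Let n ≥ 2 be an integer, Γ = ℝ × {0, 1, …, n−1}, and let Λ ⊂ ℝ² be a closed set that is 2-periodic with respect to the second variable. For 2 ≤ k ≤ n−2 define Π̃^{k*}_{ne}(Λ) = Π^{k*}_{su}(Λ) ∩ {ξ ∈ Π^k(Λ) : τ ∈ P^{Π^k(Λ),ξ}_2}, where τ(ξ) = ∏_{p=2}^{k} ∏_{q=1}^{p−1} (e^{πiη_p} − e^{πiη_q})² with η_1 < ⋯ < η_k the elements of Img(ξ). If (Γ, Λ) is a Heisenberg uniqueness pair, then the set Π^n(Λ) ∪ (Π^1(Λ) \ Π^{1*}(Λ)) ∪ (Π^{n−1}(Λ) \ Π^{(n−1)*}(Λ)) ∪ ⋃_{j=2}^{n−2} (Π^j(Λ) \ Π̃^{j*}_{ne}(Λ)) is dense in ℝ. -/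

import Mathlib

open MeasureTheory Complex

/-- Fourier transform with the convention `f̂(ξ) = ∫ e^{πixξ} f(x) dx`. -/
noncomputable def FT (f : ℝ → ℂ) (ξ : ℝ) : ℂ :=
  ∫ x : ℝ, Complex.exp (Real.pi * Complex.I * x * ξ) * f x

/-- `e^{πiη}`. -/
noncomputable def cexpEta (η : ℝ) : ℂ := Complex.exp (Real.pi * Complex.I * η)

/-- `Λ` is 2-periodic with respect to the second variable. -/
def Periodic2 (Λ : Set (ℝ × ℝ)) : Prop :=
  ∀ ξ η : ℝ, (ξ, η) ∈ Λ ↔ (ξ, η + 2) ∈ Λ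

/-- The projection `Π(Λ)` of `Λ` on the x-axis. -/
def proj (Λ : Set (ℝ × ℝ)) : Set ℝ := {ξ | ∃ η : ℝ, (ξ, η) ∈ Λ}

/-- `Img(ξ) = {η ∈ [0,2) : (ξ,η) ∈ Λ}`. -/
def Img (Λ : Set (ℝ × ℝ)) (ξ : ℝ) : Set ℝ := {η | η ∈ Set.Ico (0 : ℝ) 2 ∧ (ξ, η) ∈ Λ}

/-- `Π^k(Λ)` for `k < n`: points of `Π(Λ)` whose `Img` has exactly `k` elements. -/
def projExact (Λ : Set (ℝ × ℝ)) (k : ℕ) : Set ℝ :=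
  {ξ | ξ ∈ proj Λ ∧ (Img Λ ξ).encard = k}

/-- `Π^n(Λ)`: points of `Π(Λ)` whose `Img` has at least `n` elements. -/
def projAtLeast (Λ : Set (ℝ × ℝ)) (n : ℕ) : Set ℝ :=
  {ξ | ξ ∈ proj Λ ∧ (n : ℕ∞) ≤ (Img Λ ξ).encard}

/-- `ψ ∈ P^{E,ξ}_l` : there are an open interval `I ∋ ξ` and `φ_1,…,φ_{l-1} ∈ L¹(ℝ)` with
`φ̂_1 + φ̂_2 ψ + ⋯ + φ̂_{l-1} ψ^{l-2} + ψ^{l-1} = 0` on `I ∩ E`. -/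
def Pmem (E : Set ℝ) (ξ : ℝ) (l : ℕ) (ψ : ℝ → ℂ) : Prop :=
  ∃ a b : ℝ, ξ ∈ Set.Ioo a b ∧
    ∃ φ : Fin (l - 1) → ℝ → ℂ, (∀ i, Integrable (φ i)) ∧
      ∀ x ∈ Set.Ioo a b ∩ E,
        (∑ i : Fin (l - 1), FT (φ i) x * ψ x ^ (i : ℕ)) + ψ x ^ (l - 1) = 0

/-- `Π^{1*}(Λ)`: those `ξ ∈ Π^1(Λ)` such that `χ ∈ P^{Π^1(Λ),ξ}_n`, where
`χ(ξ') = e^{πiη}` with `η` the unique element of `Img(ξ')`. -/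
def projOneStar (Λ : Set (ℝ × ℝ)) (n : ℕ) : Set ℝ :=
  {ξ | ξ ∈ projExact Λ 1 ∧ ∃ χ : ℝ → ℂ,
    (∀ ξ' ∈ projExact Λ 1, ∀ η ∈ Img Λ ξ', χ ξ' = cexpEta η) ∧
    Pmem (projExact Λ 1) ξ n χ}

/-- `Π^{k*}_{su}(Λ)`. -/
def projStarSu (Λ : Set (ℝ × ℝ)) (n k : ℕ) : Set ℝ :=
  {ξ | ξ ∈ projExact Λ k ∧ ∃ a b : ℝ, ξ ∈ Set.Ioo a b ∧
    ∃ φ : Fin (n - 1) → ℝ → ℂ, (∀ i, Integrable (φ i)) ∧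
      ∀ ξ' ∈ Set.Ioo a b ∩ projExact Λ k, ∀ η ∈ Img Λ ξ',
        (∑ i : Fin (n - 1), FT (φ i) ξ' * cexpEta η ^ (i : ℕ)) = -(cexpEta η ^ (n - 1))}

/-- `Π^{k*}_{ne}(Λ)` for `k ≥ 2`. -/
def projStarNe (Λ : Set (ℝ × ℝ)) (k : ℕ) : Set ℝ :=
  {ξ | ξ ∈ projExact Λ k ∧ ∃ a b : ℝ, ξ ∈ Set.Ioo a b ∧
    ∃ φ : Fin k → ℝ → ℂ, (∀ i, Integrable (φ i)) ∧
      ∀ ξ' ∈ Set.Ioo a b ∩ projExact Λ k, ∀ η ∈ Img Λ ξ',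
        (∑ i : Fin k, FT (φ i) ξ' * cexpEta η ^ (i : ℕ)) = -(cexpEta η ^ k)}

/-- `(Γ, Λ)` with `Γ = ℝ × {0,…,n-1}` is a Heisenberg uniqueness pair: every admissible
measure `μ = Σ_m (x ↦ (x,m))_*(f_m dx)` (with each `f_m ∈ L¹(ℝ)`) whose Fourier transform
`μ̂(ξ,η) = Σ_m e^{mπiη} f̂_m(ξ)` vanishes on `Λ` must be zero, i.e. each `f_m = 0` a.e. -/
def IsHUP (n : ℕ) (Λ : Set (ℝ × ℝ)) : Prop :=
  ∀ f : Fin n → ℝ → ℂ, (∀ m, Integrable (f m)) →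
    (∀ ξ η : ℝ, (ξ, η) ∈ Λ → ∑ m : Fin n, cexpEta η ^ (m : ℕ) * FT (f m) ξ = 0) →
    ∀ m, f m =ᵐ[volume] (0 : ℝ → ℂ)

/-- `τ` agrees on `Π^k(Λ)` with `ξ ↦ ∏_{q<p} (e^{πiη_p} - e^{πiη_q})²`, where
`η_1 < ⋯ < η_k` enumerate `Img(ξ)`. -/
def tauSpec (Λ : Set (ℝ × ℝ)) (k : ℕ) (τ : ℝ → ℂ) : Prop :=
  ∀ ξ' ∈ projExact Λ k, ∀ η : Fin k → ℝ, StrictMono η → Set.range η = Img Λ ξ' →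
    τ ξ' = ∏ p : Fin k, ∏ q : Fin k,
      if (q : ℕ) < (p : ℕ) then (cexpEta (η p) - cexpEta (η q)) ^ 2 else 1

/-- `Π̃^{k*}_{ne}(Λ) = Π^{k*}_{su}(Λ) ∩ {ξ ∈ Π^k(Λ) : τ ∈ P^{Π^k(Λ),ξ}_2}`. -/
def projStarNeTilde (Λ : Set (ℝ × ℝ)) (n k : ℕ) : Set ℝ :=
  projStarSu Λ n k ∩
    {ξ | ξ ∈ projExact Λ k ∧ ∃ τ : ℝ → ℂ, tauSpec Λ k τ ∧ Pmem (projExact Λ k) ξ 2 τ}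

/-!
Argue by contradiction on an open set `J` missed by the set in question. Over `J` every fibre
`Img Λ x` has fewer than `n` points, and near a fibre of `k` points the discriminant of the
`k`-point fibres is a continuous function of `x`: it is `τ` for `2 ≤ k ≤ n - 2`, and for `k = n - 1`
it is the resultant of `p` and `p'`, where `p` is the monic polynomial of degree `n - 1` whose roots
are exactly the points of the fibre. Since it does not vanish, points of a `k`-point fibre cannot
merge in the limit, so limits of `k`-point fibres have at least `k` points. Hence the fibres have a
constant number of points over some open subset of `J`. There the local relation of degree `n - 1`
holds over a full neighbourhood, and multiplying it by a Fourier transform supported in that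
neighbourhood yields a nonzero admissible measure whose transform vanishes on `Λ`.
-/

open Filter Set
open scoped FourierTransform Convolution Topology SchwartzMap

section LevelSets

variable {X α : Type*} [TopologicalSpace X] [LinearOrder α]

theorem exists_isOpen_forall_eq_of_finite_image {f : X → α} {U : Set X} (hU : IsOpen U)
    (hne : U.Nonempty) (hfin : (f '' U).Finite)
    (hf : ∀ x ∈ U, ∀ᶠ y in 𝓝 x, y ∈ closure (f ⁻¹' {f x}) → f x ≤ f y) :
    ∃ V ⊆ U, IsOpen V ∧ V.Nonempty ∧ ∃ c, ∀ x ∈ V, f x = c := by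
  obtain ⟨V, ⟨hVU, hV, hVne⟩, hmin⟩ := exists_minimalFor_of_wellFoundedLT
    (fun V : Set X => V ⊆ U ∧ IsOpen V ∧ V.Nonempty) (fun V => (f '' V).ncard)
    ⟨U, Subset.rfl, hU, hne⟩
  have hVfin : (f '' V).Finite := hfin.subset (image_mono hVU)
  obtain ⟨x, hxV, hmax⟩ := hVfin.exists_maximalFor' f V hVne
  have hle : ∀ y ∈ V, f y ≤ f x := fun y hy => (le_total (f y) (f x)).elim id (hmax hy)
  obtain ⟨W, hWf, hW, hxW⟩ := eventually_nhds_iff.1 (hf x (hVU hxV))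
  -- Off the closure of the top level, `f` would take fewer values.
  have hclosure : W ∩ V ⊆ closure (f ⁻¹' {f x}) := by
    by_contra hnot
    obtain ⟨y, hy, hyc⟩ := not_subset.1 hnot
    let V' := W ∩ V ∩ (closure (f ⁻¹' {f x}))ᶜ
    have hV' : V' ⊆ V := fun z hz => hz.1.2
    have hlt : f '' V' ⊂ f '' V := by
      refine (image_mono hV').ssubset_of_mem_notMem (mem_image_of_mem f hxV) ?_
      rintro ⟨z, hz, hzx⟩
      exact hz.2 (subset_closure hzx)
    exact (ncard_lt_ncard hlt hVfin).not_ge <| hmin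
      ⟨hV'.trans hVU, (hW.inter hV).inter isClosed_closure.isOpen_compl, y, hy, hyc⟩
      (ncard_le_ncard hlt.subset hVfin)
  exact ⟨W ∩ V, fun y hy => hVU hy.2, hW.inter hV, ⟨x, hxW, hxV⟩, f x,
    fun y hy => (hle y hy.2).antisymm (hWf y hy.1 (hclosure hy))⟩

end LevelSets

section MonicPolynomials

open Polynomial

/-- The monic polynomial `X ^ d + ∑ cᵢ X ^ i` with prescribed lower coefficients, in which the local
relations defining `Π^{1*}` and `Π^{k*}_{su}` are expressed. -/
noncomputable def monicPoly {R : Type*} [Semiring R] {d : ℕ} (c : Fin d → R) : R[X] :=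
  X ^ d + ∑ i, C (c i) * X ^ (i : ℕ)

section Semiring

variable {R : Type*} [Semiring R] {d : ℕ}

lemma degree_monicPoly [Nontrivial R] (c : Fin d → R) : (monicPoly c).degree = d := by
  rw [monicPoly, degree_add_eq_left_of_degree_lt] <;> simp [degree_sum_fin_lt]

lemma monic_monicPoly (c : Fin d → R) : (monicPoly c).Monic :=
  monic_X_pow_add (degree_sum_fin_lt c)

lemma coeff_monicPoly (c : Fin d → R) (j : ℕ) :
    (monicPoly c).coeff j =
      (if j = d then 1 else 0) + ∑ i, c i * if j = (i : ℕ) then 1 else 0 := by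
  simp [monicPoly, coeff_X_pow]

end Semiring

lemma eval_monicPoly {R : Type*} [CommSemiring R] {d : ℕ} (c : Fin d → R) (z : R) :
    (monicPoly c).eval z = ∑ i, c i * z ^ (i : ℕ) + z ^ d := by
  simp [monicPoly, eval_finsetSum, add_comm]

lemma monicPoly_eq_nodal {R : Type*} [CommRing R] [IsDomain R] {d : ℕ} {c z : Fin d → R}
    (hz : Function.Injective z) (hroot : ∀ i, (monicPoly c).eval (z i) = 0) :
    monicPoly c = Lagrange.nodal Finset.univ z := by
  refine eq_of_degree_sub_lt_of_eval_index_eq Finset.univ hz.injOn ?_ fun i hi => by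
    rw [hroot, Lagrange.eval_nodal_at_node hi]
  have hdeg : (monicPoly c).degree = (Lagrange.nodal Finset.univ z).degree := by
    rw [degree_monicPoly, Lagrange.degree_nodal, Finset.card_fin]
  have hlt := degree_sub_lt_left hdeg (monic_monicPoly c).ne_zero
    ((monic_monicPoly c).trans Lagrange.nodal_monic.symm)
  simpa only [degree_monicPoly, Finset.card_fin] using hlt

lemma resultant_nodal_derivative {R ι : Type*} [CommRing R] [Nontrivial R] [DecidableEq ι]
    (s : Finset ι) (v : ι → R) :
    (Lagrange.nodal s v).resultant (Lagrange.nodal s v).derivative s.card (s.card - 1) =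
      ∏ i ∈ s, ∏ j ∈ s.erase i, (v i - v j) := by
  have hdeg : (Lagrange.nodal s v).derivative.natDegree ≤ s.card - 1 := by
    simpa [Lagrange.natDegree_nodal] using natDegree_derivative_le (Lagrange.nodal s v)
  have hprod := resultant_prod_left s (fun i => X - C (v i))
    (Lagrange.nodal s v).derivative (s.card - 1) (by simp) hdeg
  rw [← Lagrange.nodal_eq, Lagrange.natDegree_nodal] at hprod
  rw [hprod]
  refine Finset.prod_congr rfl fun i hi => ?_
  rw [natDegree_X_sub_C, resultant_X_sub_C_left _ _ _ hdeg,
    Lagrange.eval_nodal_derivative_eval_node_eq hi, Lagrange.eval_nodal]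

lemma prod_prod_erase_sub_ne_zero_iff {R ι : Type*} [CommRing R] [IsDomain R] [DecidableEq ι]
    {s : Finset ι} {v : ι → R} :
    ∏ i ∈ s, ∏ j ∈ s.erase i, (v i - v j) ≠ 0 ↔ InjOn v s := by
  simp only [Finset.prod_ne_zero_iff, Finset.mem_erase, sub_ne_zero]
  exact ⟨fun h i hi j hj hij => by_contra fun hne => h i hi j ⟨Ne.symm hne, hj⟩ hij,
    fun h i hi j ⟨hne, hj⟩ hij => hne (h hi hj hij).symm⟩

section Continuity

variable {X R : Type*} [TopologicalSpace X] [CommRing R] [TopologicalSpace R] [IsTopologicalRing R]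

lemma continuous_resultant {f g : X → R[X]} (hf : ∀ i, Continuous fun x => (f x).coeff i)
    (hg : ∀ i, Continuous fun x => (g x).coeff i) (m n : ℕ) :
    Continuous fun x => (f x).resultant (g x) m n := by
  refine Continuous.matrix_det (continuous_matrix fun i j => ?_)
  induction j using Fin.addCases with
  | left j =>
    simp only [sylvester, Matrix.of_apply, Fin.addCases_left]
    split_ifs <;> fun_prop
  | right j =>
    simp only [sylvester, Matrix.of_apply, Fin.addCases_right]
    split_ifs <;> fun_prop

lemma continuous_resultant_monicPoly_derivative {d : ℕ} {c : X → Fin d → R} (hc : Continuous c)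
    (m n : ℕ) :
    Continuous fun x => (monicPoly (c x)).resultant (monicPoly (c x)).derivative m n := by
  have hcoeff : ∀ i, Continuous fun x => (monicPoly (c x)).coeff i := fun i => by
    simp only [coeff_monicPoly]
    fun_prop
  refine continuous_resultant hcoeff (fun i => ?_) m n
  simp only [coeff_derivative]
  exact (hcoeff (i + 1)).mul_const _

end Continuity

end MonicPolynomials

section Fourier

lemma FT_eq_fourier (f : ℝ → ℂ) (ξ : ℝ) : FT f ξ = 𝓕 f (-ξ / 2) := by
  rw [Real.fourier_real_eq_integral_exp_smul, FT]
  congr with x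
  rw [smul_eq_mul]
  congr 2
  push_cast
  ring

lemma FT_congr_ae {f g : ℝ → ℂ} (h : f =ᵐ[volume] g) : FT f = FT g := by
  ext ξ
  rw [FT_eq_fourier, FT_eq_fourier, Real.fourier_congr_ae h]

lemma continuous_FT {f : ℝ → ℂ} (hf : Integrable f) : Continuous (FT f) := by
  have hcont : Continuous (𝓕 f) := VectorFourier.fourierIntegral_continuous
    Real.continuous_fourierChar (by exact continuous_inner) hf
  rw [funext (FT_eq_fourier f)]
  fun_prop

lemma exists_integrable_FT_eq_mul {f g : ℝ → ℂ} (hf : Integrable f) (hg : Integrable g) :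
    ∃ h : ℝ → ℂ, Integrable h ∧ ∀ ξ, FT h ξ = FT f ξ * FT g ξ := by
  refine ⟨f ⋆[ContinuousLinearMap.mul ℂ ℂ] g, hf.integrable_convolution _ hg, fun ξ => ?_⟩
  simp only [FT_eq_fourier, Real.fourier_mul_convolution_eq hf hg]

lemma exists_schwartz_FT_eq (G : 𝓢(ℝ, ℂ)) : ∃ h : 𝓢(ℝ, ℂ), FT h = G := by
  let scale : ℝ ≃L[ℝ] ℝ := ContinuousLinearEquiv.unitsEquivAut ℝ (Units.mk0 (-2) (by norm_num))
  let H : 𝓢(ℝ, ℂ) := SchwartzMap.compCLMOfContinuousLinearEquiv ℂ scale G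
  refine ⟨𝓕⁻ H, funext fun ξ => ?_⟩
  rw [FT_eq_fourier, ← SchwartzMap.fourier_coe, FourierTransform.fourier_fourierInv_eq]
  simp [H, scale]

lemma exists_integrable_FT_support_subset {U : Set ℝ} {x : ℝ} (hU : U ∈ 𝓝 x) :
    ∃ h : ℝ → ℂ, Integrable h ∧ (∀ ξ, ξ ∉ U → FT h ξ = 0) ∧ FT h x ≠ 0 := by
  obtain ⟨f, hfU, hfc, hfs, -, hfx⟩ := exists_contDiff_tsupport_subset (n := ⊤) hU
  have hgc : HasCompactSupport fun w => (f w : ℂ) := hfc.comp_left Complex.ofReal_zero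
  obtain ⟨h, hh⟩ := exists_schwartz_FT_eq
    (hgc.toSchwartzMap (Complex.ofRealCLM.contDiff.comp hfs))
  have hval : ∀ ξ, FT h ξ = f ξ := fun ξ => congr_fun hh ξ
  refine ⟨h, h.integrable, fun ξ hξ => ?_, ?_⟩
  · rw [hval, image_eq_zero_of_notMem_tsupport fun hs => hξ (hfU hs), Complex.ofReal_zero]
  · simp [hval, hfx]

end Fourier

section Fibres

variable {Λ : Set (ℝ × ℝ)}

lemma continuous_cexpEta : Continuous cexpEta := by
  unfold cexpEta
  fun_prop

lemma periodic_cexpEta : Function.Periodic cexpEta 2 := fun η => by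
  rw [cexpEta, cexpEta, Complex.exp_eq_exp_iff_exists_int]
  exact ⟨1, by push_cast; ring⟩

lemma injOn_cexpEta : InjOn cexpEta (Ico 0 2) := by
  intro η hη η' hη' heq
  obtain ⟨m, hm⟩ := Complex.exp_eq_exp_iff_exists_int.1 heq
  have hshift : η = η' + m * 2 := by
    have hπ : (Real.pi * Complex.I : ℂ) ≠ 0 := by simp [Real.pi_ne_zero]
    exact_mod_cast mul_left_cancel₀ hπ (a := Real.pi * Complex.I) (b := (η : ℂ))
      (c := η' + m * 2) (by rw [hm]; ring)
  have hm0 : m = 0 := by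
    have hlt : (m : ℝ) < 1 := by linarith [hη.2, hη'.1]
    have hgt : (-1 : ℝ) < m := by linarith [hη.1, hη'.2]
    norm_cast at hlt hgt
    omega
  simpa [hm0] using hshift

lemma Periodic2.exists_mem_Img (hper : Periodic2 Λ) {ξ η : ℝ} (h : (ξ, η) ∈ Λ) :
    ∃ η' ∈ Img Λ ξ, cexpEta η' = cexpEta η := by
  have hpair : Function.Periodic (fun η => ((ξ, η) ∈ Λ, cexpEta η)) 2 := fun η =>
    Prod.ext (propext (hper ξ η).symm) (periodic_cexpEta η)
  obtain ⟨η', hη', heq⟩ := hpair.exists_mem_Ico₀ two_pos η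
  obtain ⟨hmem, hexp⟩ := Prod.ext_iff.1 heq
  exact ⟨η', ⟨hη', hmem.mp h⟩, hexp.symm⟩

lemma Periodic2.le_encard_Img (hper : Periodic2 Λ) {k : ℕ} {ξ : ℝ} {η : Fin k → ℝ}
    (hη : ∀ i, (ξ, η i) ∈ Λ) (hinj : Function.Injective (cexpEta ∘ η)) :
    (k : ℕ∞) ≤ (Img Λ ξ).encard := by
  choose η' hη' heq using fun i => hper.exists_mem_Img (hη i)
  have hinj' : Function.Injective η' := fun i j hij => hinj <| by
    simp only [Function.comp_apply, ← heq, hij]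
  calc (k : ℕ∞) = (range η').encard := by
        rw [← image_univ, hinj'.encard_image, encard_univ, ENat.card_eq_coe_fintype_card,
          Fintype.card_fin]
    _ ≤ (Img Λ ξ).encard := encard_le_encard (range_subset_iff.2 hη')

lemma exists_strictMono_range_eq {α : Type*} [LinearOrder α] {S : Set α} {k : ℕ}
    (h : S.encard = k) : ∃ η : Fin k → α, StrictMono η ∧ range η = S := by
  have hfin : S.Finite := finite_of_encard_eq_coe h
  have hcard : hfin.toFinset.card = k := by
    exact_mod_cast hfin.encard_eq_coe_toFinset_card.symm.trans h
  exact ⟨hfin.toFinset.orderEmbOfFin hcard, (hfin.toFinset.orderEmbOfFin hcard).strictMono,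
    by simp⟩

lemma injective_cexpEta_comp {k : ℕ} {ξ : ℝ} {η : Fin k → ℝ} (hη : StrictMono η)
    (hrange : range η = Img Λ ξ) : Function.Injective (cexpEta ∘ η) := by
  have hmem : ∀ i, η i ∈ Img Λ ξ := fun i => hrange ▸ mem_range_self i
  exact fun i j hij => hη.injective (injOn_cexpEta (hmem i).1 (hmem j).1 hij)

lemma isClosed_setOf_exists_fibre_points {Y : Type*} [TopologicalSpace Y] [T2Space Y]
    (hclosed : IsClosed Λ) {k : ℕ} {F : (Fin k → ℂ) → Y} (hF : Continuous F) {g : ℝ → Y}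
    (hg : Continuous g) :
    IsClosed {x | ∃ η : Fin k → Icc (0 : ℝ) 2,
      (∀ i, (x, (η i : ℝ)) ∈ Λ) ∧ F (fun i => cexpEta (η i)) = g x} := by
  have hcexp := continuous_cexpEta
  have hgraph : IsClosed {p : (Fin k → Icc (0 : ℝ) 2) × ℝ |
      (∀ i, (p.2, (p.1 i : ℝ)) ∈ Λ) ∧ F (fun i => cexpEta (p.1 i)) = g p.2} := by
    simp only [ofPred_and, ofPred_forall]
    exact (isClosed_iInter fun i => hclosed.preimage (by fun_prop)).inter
      (isClosed_eq (by fun_prop) (by fun_prop))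
  convert isClosedMap_snd_of_compactSpace _ hgraph using 1
  ext x
  simp

end Fibres

section Discriminant

variable {Λ : Set (ℝ × ℝ)} {k : ℕ} {ξ : ℝ}

/-- The points whose fibre has exactly `k` elements. For `k ≠ 0` this is `Π^k(Λ)`; unlike
`projExact Λ 0` it contains, for `k = 0`, the points outside `Π(Λ)`. -/
def fibreLevel (Λ : Set (ℝ × ℝ)) (k : ℕ) : Set ℝ := {x | (Img Λ x).encard = k}

/-- Near `ξ` a discriminant of the `k`-point fibres is a continuous function of the base point. Any
continuous `F` on `k`-tuples that vanishes exactly when two entries coincide is admitted as a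
discriminant. -/
def HasContinuousDiscriminantAt (Λ : Set (ℝ × ℝ)) (k : ℕ) (ξ : ℝ) : Prop :=
  ∃ F : (Fin k → ℂ) → ℂ, Continuous F ∧ (∀ z, F z ≠ 0 ↔ Function.Injective z) ∧
    ∃ g : ℝ → ℂ, Continuous g ∧ ∀ᶠ x in 𝓝[fibreLevel Λ k] ξ, ∀ η : Fin k → ℝ,
      StrictMono η → range η = Img Λ x → F (cexpEta ∘ η) = g x

/-- Near `ξ` the points `e^{πiη}` of all fibres over `E` are roots of a common monic polynomial of
degree `d` whose lower coefficients are Fourier transforms of integrable functions. -/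
def HasMonicRelationAt (Λ : Set (ℝ × ℝ)) (d : ℕ) (E : Set ℝ) (ξ : ℝ) : Prop :=
  ∃ φ : Fin d → ℝ → ℂ, (∀ i, Integrable (φ i)) ∧
    ∀ᶠ x in 𝓝[E] ξ, ∀ η ∈ Img Λ x, (monicPoly fun i => FT (φ i) x).eval (cexpEta η) = 0

lemma fibreLevel_eq_projExact (hk : k ≠ 0) : fibreLevel Λ k = projExact Λ k := by
  ext x
  refine ⟨fun hx => ⟨?_, hx⟩, fun hx => hx.2⟩
  obtain ⟨η, hη⟩ : (Img Λ x).Nonempty := by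
    rw [← encard_ne_zero, show (Img Λ x).encard = k from hx]
    exact_mod_cast hk
  exact ⟨η, hη.2⟩

theorem HasContinuousDiscriminantAt.eventually_le_encard (hclosed : IsClosed Λ)
    (hper : Periodic2 Λ) (h : HasContinuousDiscriminantAt Λ k ξ) (hξ : ξ ∈ fibreLevel Λ k) :
    ∀ᶠ y in 𝓝 ξ, y ∈ closure (fibreLevel Λ k) → (k : ℕ∞) ≤ (Img Λ y).encard := by
  obtain ⟨F, hF, hFinj, g, hg, hFg⟩ := h
  have hgξ : g ξ ≠ 0 := by
    obtain ⟨η, hη, hrange⟩ := exists_strictMono_range_eq hξ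
    rw [← hFg.self_of_nhdsWithin hξ η hη hrange]
    exact (hFinj _).2 (injective_cexpEta_comp hη hrange)
  filter_upwards [hg.continuousAt.eventually_ne hgξ,
    (eventually_nhdsWithin_iff.1 hFg).eventually_nhds] with y hgy hFgy hy
  have hlimit : y ∈ closure {x | ∃ η : Fin k → Icc (0 : ℝ) 2,
      (∀ i, (x, (η i : ℝ)) ∈ Λ) ∧ F (fun i => cexpEta (η i)) = g x} := by
    refine mem_closure_iff_frequently.2 <| ((mem_closure_iff_frequently.1 hy).and_eventually
      hFgy).mono fun x ⟨hx, hFx⟩ => ?_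
    obtain ⟨η, hη, hrange⟩ := exists_strictMono_range_eq hx
    have hmem : ∀ i, η i ∈ Img Λ x := fun i => hrange ▸ mem_range_self i
    exact ⟨fun i => ⟨η i, Ico_subset_Icc_self (hmem i).1⟩, fun i => (hmem i).2,
      hFx hx η hη hrange⟩
  rw [(isClosed_setOf_exists_fibre_points hclosed hF hg).closure_eq] at hlimit
  obtain ⟨η, hη, hFη⟩ := hlimit
  exact hper.le_encard_Img hη ((hFinj _).1 (hFη ▸ hgy))

lemma hasContinuousDiscriminantAt_of_le_one (hk : k ≤ 1) : HasContinuousDiscriminantAt Λ k ξ := by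
  have : Subsingleton (Fin k) := Fin.subsingleton_iff_le_one.2 hk
  exact ⟨1, continuous_const, fun z => iff_of_true one_ne_zero z.injective_of_subsingleton,
    1, continuous_const, .of_forall fun _ _ _ _ => rfl⟩

lemma HasMonicRelationAt.hasContinuousDiscriminantAt
    (h : HasMonicRelationAt Λ k (fibreLevel Λ k) ξ) : HasContinuousDiscriminantAt Λ k ξ := by
  obtain ⟨φ, hφ, hroot⟩ := h
  have hcoeff : Continuous fun x i => FT (φ i) x := continuous_pi fun i => continuous_FT (hφ i)
  refine ⟨fun z => ∏ i, ∏ j ∈ Finset.univ.erase i, (z i - z j), by fun_prop,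
    fun z => by simpa using prod_prod_erase_sub_ne_zero_iff (s := Finset.univ) (v := z), _,
    continuous_resultant_monicPoly_derivative hcoeff k (k - 1), ?_⟩
  filter_upwards [hroot] with x hx η hη hrange
  rw [monicPoly_eq_nodal (injective_cexpEta_comp hη hrange)
    fun i => hx (η i) (hrange ▸ mem_range_self i)]
  simpa using (resultant_nodal_derivative Finset.univ (cexpEta ∘ η)).symm

lemma sq_det_vandermonde {R : Type*} [CommRing R] {k : ℕ} (z : Fin k → R) :
    (Matrix.vandermonde z).det ^ 2 =
      ∏ p : Fin k, ∏ q : Fin k, if (q : ℕ) < (p : ℕ) then (z p - z q) ^ 2 else 1 := by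
  rw [Matrix.det_vandermonde, Finset.prod_comm]
  simp only [← Finset.prod_pow, ← Finset.prod_filter, Fin.val_fin_lt, Finset.filter_lt_eq_Ioi]

lemma hasContinuousDiscriminantAt_of_tauSpec (hk : k ≠ 0) {τ : ℝ → ℂ} (hτ : tauSpec Λ k τ)
    (hmem : Pmem (projExact Λ k) ξ 2 τ) : HasContinuousDiscriminantAt Λ k ξ := by
  obtain ⟨a, b, hab, φ, hφ, hz⟩ := hmem
  refine ⟨fun z => (Matrix.vandermonde z).det ^ 2, by simp only [Matrix.det_vandermonde]; fun_prop,
    fun z => by rw [pow_ne_zero_iff two_ne_zero, Matrix.det_vandermonde_ne_zero_iff],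
    fun x => -FT (φ 0) x, (continuous_FT (hφ 0)).neg, ?_⟩
  rw [fibreLevel_eq_projExact hk]
  filter_upwards [inter_mem_nhdsWithin _ (isOpen_Ioo.mem_nhds hab)] with x hx η hη hrange
  have hrel : FT (φ 0) x + τ x = 0 := by simpa using hz x hx.symm
  rw [sq_det_vandermonde]
  exact (hτ x hx.1 η hη hrange).symm.trans (eq_neg_of_add_eq_zero_right hrel)

end Discriminant

section Relations

variable {Λ : Set (ℝ × ℝ)} {n k : ℕ} {ξ : ℝ}

lemma hasMonicRelationAt_of_mem_projStarSu (h : ξ ∈ projStarSu Λ n k) :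
    HasMonicRelationAt Λ (n - 1) (projExact Λ k) ξ := by
  obtain ⟨-, a, b, hab, φ, hφ, hz⟩ := h
  refine ⟨φ, hφ, ?_⟩
  filter_upwards [inter_mem_nhdsWithin _ (isOpen_Ioo.mem_nhds hab)] with x hx η hη
  rw [eval_monicPoly, hz x hx.symm η hη, neg_add_cancel]

lemma hasMonicRelationAt_of_mem_projOneStar (h : ξ ∈ projOneStar Λ n) :
    HasMonicRelationAt Λ (n - 1) (projExact Λ 1) ξ := by
  obtain ⟨-, χ, hχ, a, b, hab, φ, hφ, hz⟩ := h
  refine ⟨φ, hφ, ?_⟩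
  filter_upwards [inter_mem_nhdsWithin _ (isOpen_Ioo.mem_nhds hab)] with x hx η hη
  rw [eval_monicPoly, ← hχ x hx.1 η hη]
  exact hz x hx.symm

lemma hasMonicRelationAt_fibreLevel_zero (d : ℕ) :
    HasMonicRelationAt Λ d (fibreLevel Λ 0) ξ := by
  refine ⟨0, fun _ => integrable_zero _ _ _, ?_⟩
  filter_upwards [self_mem_nhdsWithin] with x hx η hη
  rw [encard_eq_zero.1 hx] at hη
  exact hη.elim

/-- Multiplying the relation by the transform `ĥ` of a function with `ĥ` supported near `ξ` gives
the admissible measure with densities `φ₀ ⋆ h, …, φ_{d-1} ⋆ h, h`. -/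
theorem IsHUP.not_hasMonicRelationAt_univ {d : ℕ} (hHUP : IsHUP (d + 1) Λ) (hper : Periodic2 Λ) :
    ¬ HasMonicRelationAt Λ d univ ξ := by
  rintro ⟨φ, hφ, hroot⟩
  rw [nhdsWithin_univ] at hroot
  obtain ⟨h, hh, hsupp, hne⟩ := exists_integrable_FT_support_subset hroot
  choose ψ hψ hFTψ using fun i => exists_integrable_FT_eq_mul (hφ i) hh
  have hint : ∀ m, Integrable (Fin.snoc (α := fun _ => ℝ → ℂ) ψ h m) :=
    Fin.lastCases (by simpa using hh) fun i => by simpa using hψ i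
  have hlast := hHUP _ hint (fun x η hx => ?_) (Fin.last d)
  · rw [Fin.snoc_last] at hlast
    refine hne ?_
    rw [FT_congr_ae hlast]
    simp [FT]
  · have hfactor : (monicPoly fun i => FT (φ i) x).eval (cexpEta η) * FT h x = 0 := by
      by_cases hxU : ∀ η ∈ Img Λ x, (monicPoly fun i => FT (φ i) x).eval (cexpEta η) = 0
      · obtain ⟨η', hη', heq⟩ := hper.exists_mem_Img hx
        rw [← heq, hxU η' hη', zero_mul]
      · rw [hsupp x hxU, mul_zero]
    rw [← hfactor, eval_monicPoly, Fin.sum_univ_castSucc, add_mul, Finset.sum_mul]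
    simp only [Fin.snoc_castSucc, Fin.snoc_last, Fin.val_castSucc, Fin.val_last, hFTψ]
    congr 1
    exact Finset.sum_congr rfl fun i _ => by ring

/-- The set whose density is necessary for `(Γ, Λ)` to be a Heisenberg uniqueness pair. -/
def criticalSet (Λ : Set (ℝ × ℝ)) (n : ℕ) : Set ℝ :=
  projAtLeast Λ n ∪ (projExact Λ 1 \ projOneStar Λ n) ∪
    (projExact Λ (n - 1) \ projStarSu Λ n (n - 1)) ∪
    ⋃ j ∈ Finset.Icc 2 (n - 2), (projExact Λ j \ projStarNeTilde Λ n j)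

lemma encard_Img_lt_of_notMem_criticalSet (hn : n ≠ 0) (hξ : ξ ∉ criticalSet Λ n) :
    (Img Λ ξ).encard < n := by
  by_contra! hle
  obtain ⟨η, hη⟩ : (Img Λ ξ).Nonempty := by
    rw [← encard_ne_zero, ← pos_iff_ne_zero]
    exact lt_of_lt_of_le (by exact_mod_cast Nat.pos_of_ne_zero hn) hle
  exact hξ (Or.inl (Or.inl (Or.inl ⟨⟨η, hη.2⟩, hle⟩)))

lemma hasMonicRelationAt_and_hasContinuousDiscriminantAt (hξ : ξ ∉ criticalSet Λ n)
    (hk : ξ ∈ fibreLevel Λ k) (hkn : k < n) :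
    HasMonicRelationAt Λ (n - 1) (fibreLevel Λ k) ξ ∧ HasContinuousDiscriminantAt Λ k ξ := by
  simp only [criticalSet, mem_union, Set.mem_sdiff, mem_iUnion, not_or, not_exists, not_and,
    not_not] at hξ
  obtain ⟨⟨⟨-, hone⟩, hpred⟩, hmid⟩ := hξ
  obtain rfl | hk0 := eq_or_ne k 0
  · exact ⟨hasMonicRelationAt_fibreLevel_zero _, hasContinuousDiscriminantAt_of_le_one zero_le_one⟩
  have hlevel := fibreLevel_eq_projExact (Λ := Λ) hk0
  rw [hlevel] at hk
  obtain rfl | hk1 := eq_or_ne k 1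
  · exact ⟨hlevel ▸ hasMonicRelationAt_of_mem_projOneStar (hone hk),
      hasContinuousDiscriminantAt_of_le_one le_rfl⟩
  obtain rfl | hkpred := eq_or_ne k (n - 1)
  · have hrel := hlevel ▸ hasMonicRelationAt_of_mem_projStarSu (hpred hk)
    exact ⟨hrel, hrel.hasContinuousDiscriminantAt⟩
  · obtain ⟨hsu, -, τ, hτ, hmem⟩ := hmid k (Finset.mem_Icc.2 ⟨by omega, by omega⟩) hk
    exact ⟨hlevel ▸ hasMonicRelationAt_of_mem_projStarSu hsu,
      hasContinuousDiscriminantAt_of_tauSpec hk0 hτ hmem⟩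

lemma exists_isOpen_subset_fibreLevel (hclosed : IsClosed Λ) (hper : Periodic2 Λ) {J : Set ℝ}
    (hJ : IsOpen J) (hne : J.Nonempty) (hlt : ∀ x ∈ J, (Img Λ x).encard < n)
    (hdisc : ∀ x ∈ J, ∀ k < n, x ∈ fibreLevel Λ k → HasContinuousDiscriminantAt Λ k x) :
    ∃ V ⊆ J, IsOpen V ∧ V.Nonempty ∧ ∃ k < n, V ⊆ fibreLevel Λ k := by
  have hnat : ∀ x ∈ J, ∃ k < n, x ∈ fibreLevel Λ k := fun x hx => by
    obtain ⟨k, hk⟩ := ENat.ne_top_iff_exists.1 (hlt x hx).ne_top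
    exact ⟨k, by exact_mod_cast hk ▸ hlt x hx, hk.symm⟩
  have hfin : ((fun x => (Img Λ x).encard) '' J).Finite := by
    refine ((finite_Iio n).image ((↑) : ℕ → ℕ∞)).subset (image_subset_iff.2 fun x hx => ?_)
    obtain ⟨k, hkn, hk⟩ := hnat x hx
    exact ⟨k, hkn, hk.symm⟩
  obtain ⟨V, hVJ, hV, ⟨ξ, hξ⟩, c, hc⟩ :=
    exists_isOpen_forall_eq_of_finite_image hJ hne hfin fun x hx => by
      obtain ⟨k, hkn, hk⟩ := hnat x hx
      rw [show (Img Λ x).encard = k from hk]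
      exact (hdisc x hx k hkn hk).eventually_le_encard hclosed hper hk
  obtain ⟨k, hkn, hk⟩ := hnat ξ (hVJ hξ)
  exact ⟨V, hVJ, hV, ⟨ξ, hξ⟩, k, hkn, fun x hx => (hc x hx).trans ((hc ξ hξ).symm.trans hk)⟩

end Relations

theorem improved_necessary_part (n : ℕ) (hn : 2 ≤ n) (Λ : Set (ℝ × ℝ))
    (hclosed : IsClosed Λ) (hper : Periodic2 Λ) (hHUP : IsHUP n Λ) :
    Dense (projAtLeast Λ n ∪ (projExact Λ 1 \ projOneStar Λ n) ∪
      (projExact Λ (n - 1) \ projStarSu Λ n (n - 1)) ∪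
      ⋃ j ∈ Finset.Icc 2 (n - 2), (projExact Λ j \ projStarNeTilde Λ n j)) := by
  obtain ⟨d, rfl⟩ : ∃ d, n = d + 1 := ⟨n - 1, by omega⟩
  change Dense (criticalSet Λ (d + 1))
  refine dense_iff_inter_open.2 fun J hJ hne => by_contra fun hempty => ?_
  have hgood : ∀ x ∈ J, x ∉ criticalSet Λ (d + 1) := fun x hx hxc => hempty ⟨x, hx, hxc⟩
  obtain ⟨V, hVJ, hV, ⟨ξ, hξ⟩, k, hk, hVk⟩ := exists_isOpen_subset_fibreLevel hclosed hper hJ hne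
    (fun x hx => encard_Img_lt_of_notMem_criticalSet d.succ_ne_zero (hgood x hx))
    fun x hx k hk hxk =>
      (hasMonicRelationAt_and_hasContinuousDiscriminantAt (hgood x hx) hxk hk).2
  have hrel : HasMonicRelationAt Λ d (fibreLevel Λ k) ξ :=
    (hasMonicRelationAt_and_hasContinuousDiscriminantAt (hgood ξ (hVJ hξ)) (hVk hξ) hk).1
  have hnhds : 𝓝[fibreLevel Λ k] ξ = 𝓝[univ] ξ := by
    rw [nhdsWithin_univ, nhdsWithin_eq_nhds.2 (mem_of_superset (hV.mem_nhds hξ) hVk)]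
  refine hHUP.not_hasMonicRelationAt_univ (ξ := ξ) hper ?_
  rwa [HasMonicRelationAt, ← hnhds]
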